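/- Assume that for each n the coefficients of P_n(·; z) are differentiable functions of z on (0, ∞). Let σ_n(z) be minus the coefficient of x^{n−1} in P_n(x; z), and h_n(z) = ∫₀^z P_n(x; z)² x^α e^{−x} dx. Then for every n ≥ 0 and z > 0: z·σ_n′(z) = σ_n(z) − a_n(z) and z·h_n′(z) = (2n + α + 1 − b_n(z))·h_n(z); consequently the recurrence coefficients solve the Toda equations z·(ln a_n)′ = 2 − (b_n − b_{n−1}) (n ≥ 1) and z·b_n′ = b_n − (a_{n+1} − a_n) (n ≥ 0). -/

import Mathlib

open MeasureTheory intervalIntegral Polynomial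

noncomputable def tlW (α x : ℝ) : ℝ := x ^ α * Real.exp (-x)

lemma tlW_int (α : ℝ) (hα : -1 < α) (p : ℝ[X]) (s t : ℝ) :
    IntervalIntegrable (fun x => p.eval x * tlW α x) volume s t := by
  unfold tlW
  have h1 := intervalIntegral.intervalIntegrable_rpow' (a := s) (b := t) hα
  have h2 := h1.mul_continuousOn (g := fun x => Real.exp (-x)) (by fun_prop)
  exact h2.continuousOn_mul (g := fun x => p.eval x) p.continuous.continuousOn

noncomputable def tlL (α : ℝ) (z : ℝ) (p : ℝ[X]) : ℝ := ∫ x in (0:ℝ)..z, p.eval x * tlW α x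

lemma tlL_add (α : ℝ) (hα : -1 < α) (z : ℝ) (p q : ℝ[X]) :
    tlL α z (p + q) = tlL α z p + tlL α z q := by
  unfold tlL
  rw [← intervalIntegral.integral_add (tlW_int α hα p 0 z) (tlW_int α hα q 0 z)]
  simp only [eval_add, add_mul]

lemma tlL_C (α : ℝ) (z c : ℝ) (p : ℝ[X]) :
    tlL α z (C c * p) = c * tlL α z p := by
  unfold tlL
  rw [← intervalIntegral.integral_const_mul]
  simp only [eval_mul, eval_C, mul_assoc]

lemma tlL_sub (α : ℝ) (hα : -1 < α) (z : ℝ) (p q : ℝ[X]) :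
    tlL α z (p - q) = tlL α z p - tlL α z q := by
  have h1 := tlL_add α hα z (p - q) q
  rw [sub_add_cancel] at h1
  linarith

lemma tlL_zero (α : ℝ) (z : ℝ) : tlL α z 0 = 0 := by simp [tlL]

lemma tlL_sum (α : ℝ) (hα : -1 < α) (z : ℝ) (f : ℕ → ℝ[X]) (N : ℕ) :
    tlL α z (∑ k ∈ Finset.range N, f k) = ∑ k ∈ Finset.range N, tlL α z (f k) := by
  induction N with
  | zero => simp [tlL_zero]
  | succ N ih => rw [Finset.sum_range_succ, Finset.sum_range_succ, tlL_add α hα, ih]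

lemma tlL_expand (α : ℝ) (hα : -1 < α) (z : ℝ) (p : ℝ[X]) (N : ℕ) (hN : p.natDegree < N) :
    tlL α z p = ∑ k ∈ Finset.range N, p.coeff k * tlL α z (X ^ k) := by
  conv_lhs => rw [p.as_sum_range_C_mul_X_pow' hN]
  rw [tlL_sum α hα]
  simp only [tlL_C]

lemma tlL_deriv (α : ℝ) (hα : -1 < α) (z : ℝ) (hz : 0 < z) (p : ℝ[X]) :
    HasDerivAt (fun t => tlL α t p) (p.eval z * tlW α z) z := by
  have hc : ∀ y ∈ Set.Ioi (0:ℝ), ContinuousAt (fun x => p.eval x * tlW α x) y := by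
    intro y hy
    unfold tlW
    have h1 : ContinuousAt (fun x : ℝ => x ^ α) y :=
      Real.continuousAt_rpow_const _ _ (Or.inl (ne_of_gt hy))
    exact p.continuous.continuousAt.mul (h1.mul (by fun_prop))
  apply intervalIntegral.integral_hasDerivAt_right (tlW_int α hα p 0 z) _ (hc z hz)
  exact ContinuousAt.stronglyMeasurableAtFilter isOpen_Ioi hc z hz

lemma tlL_pearson (α : ℝ) (hα : -1 < α) (z : ℝ) (hz : 0 < z) (p : ℝ[X]) :
    tlL α z ((C (α + 1) - X) * p + X * derivative p) = z * tlW α z * p.eval z := by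
  have h1 := intervalIntegral.integral_eq_sub_of_hasDerivAt_of_le (a := 0) (b := z)
    (f := fun x => x ^ (α + 1) * Real.exp (-x) * p.eval x)
    (f' := fun x => ((C (α + 1) - X) * p + X * derivative p).eval x * tlW α x) hz.le
    (by
      have : Continuous (fun x : ℝ => x ^ (α + 1)) :=
        Real.continuous_rpow_const (by linarith)
      exact ((this.mul (by fun_prop)).mul p.continuous).continuousOn)
    (by
      intro x hx
      have hx0 : 0 < x := hx.1
      have d1 := Real.hasDerivAt_rpow_const (x := x) (p := α + 1) (Or.inl hx0.ne')
      have d2 : HasDerivAt (fun x => Real.exp (-x)) (Real.exp (-x) * (-1)) x :=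
        (hasDerivAt_neg x).exp
      have d3 := (d1.mul d2).mul (p.hasDerivAt x)
      refine d3.congr_deriv ?_
      have e : x ^ (α + 1) = x ^ α * x := by rw [Real.rpow_add hx0, Real.rpow_one]
      simp only [eval_add, eval_mul, eval_sub, eval_C, eval_X, tlW, add_sub_cancel_right,
        Pi.mul_apply]
      rw [e]
      ring)
    (tlW_int α hα _ 0 z)
  unfold tlL
  rw [h1]
  have e : z ^ (α + 1) = z ^ α * z := by rw [Real.rpow_add hz, Real.rpow_one]
  rw [Real.zero_rpow (by linarith), e]
  unfold tlW
  ring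

lemma tlL_pos (α : ℝ) (hα : -1 < α) (z : ℝ) (hz : 0 < z) (p : ℝ[X]) (hp : p ≠ 0) :
    0 < tlL α z (p * p) := by
  unfold tlL
  rw [intervalIntegral.integral_pos_iff_support_of_nonneg_ae' _ (tlW_int α hα _ 0 z)]
  · refine ⟨hz, ?_⟩
    have hfin : ((p.roots.toFinset : Finset ℝ) : Set ℝ).Finite := Finset.finite_toSet _
    have hsub : Set.Ioc 0 z \ (p.roots.toFinset : Set ℝ) ⊆
        Function.support (fun x => (p * p).eval x * tlW α x) ∩ Set.Ioc 0 z := by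
      intro x hx
      refine ⟨?_, hx.1⟩
      have h1 : p.eval x ≠ 0 := by
        intro h0
        apply hx.2
        simp [hp, h0]
      have h2 : tlW α x ≠ 0 := by
        have := Real.rpow_pos_of_pos hx.1.1 α
        unfold tlW; positivity
      simp [h1, h2]
    refine lt_of_lt_of_le ?_ (measure_mono hsub)
    rw [measure_sdiff_null (hfin.measure_zero volume)]
    simp [hz]
  · rw [Set.uIoc_of_le hz.le]
    refine (ae_restrict_iff' measurableSet_Ioc).2 (Filter.Eventually.of_forall ?_)
    intro x hx
    have := Real.rpow_pos_of_pos hx.1 α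
    simp only [Pi.zero_apply, eval_mul, tlW]
    have := mul_self_nonneg (p.eval x)
    positivity

/-- Coefficientwise derivative of a polynomial family. -/
def tlD (Q : ℝ → ℝ[X]) (Q' : ℝ[X]) (z : ℝ) : Prop :=
  (∃ N, (∀ᶠ t in nhds z, (Q t).natDegree < N) ∧ Q'.natDegree < N) ∧
    ∀ k, HasDerivAt (fun t => (Q t).coeff k) (Q'.coeff k) z

lemma tlD_mul {Q R : ℝ → ℝ[X]} {Q' R' : ℝ[X]} {z : ℝ} (hQ : tlD Q Q' z) (hR : tlD R R' z) :
    tlD (fun t => Q t * R t) (Q' * R z + Q z * R') z := by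
  obtain ⟨⟨N, h1, h2⟩, h3⟩ := hQ
  obtain ⟨⟨M, g1, g2⟩, g3⟩ := hR
  refine ⟨⟨N + M, ?_, ?_⟩, ?_⟩
  · filter_upwards [h1, g1] with t a1 a2
    exact lt_of_le_of_lt natDegree_mul_le (by omega)
  · have b1 := h1.self_of_nhds
    have b2 := g1.self_of_nhds
    have c1 := natDegree_mul_le (p := Q') (q := R z)
    have c2 := natDegree_mul_le (p := Q z) (q := R')
    refine lt_of_le_of_lt (natDegree_add_le _ _) (max_lt ?_ ?_) <;> omega
  · intro k
    simp only [coeff_mul, coeff_add]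
    rw [← Finset.sum_add_distrib]
    exact HasDerivAt.fun_sum (fun i _ => (h3 i.1).mul (g3 i.2))

lemma tlD_L (α : ℝ) (hα : -1 < α) {Q : ℝ → ℝ[X]} {Q' : ℝ[X]} {z : ℝ} (hz : 0 < z)
    (hQ : tlD Q Q' z) :
    HasDerivAt (fun t => tlL α t (Q t)) (tlL α z Q' + (Q z).eval z * tlW α z) z := by
  obtain ⟨⟨N, h1, h2⟩, h3⟩ := hQ
  have e : (fun t => tlL α t (Q t)) =ᶠ[nhds z]
      fun t => ∑ k ∈ Finset.range N, (Q t).coeff k * tlL α t (X ^ k) := by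
    filter_upwards [h1] with t ht
    exact tlL_expand α hα t _ N ht
  refine HasDerivAt.congr_of_eventuallyEq ?_ e
  refine (HasDerivAt.fun_sum (fun k _ => (h3 k).mul (tlL_deriv α hα z hz (X ^ k)))).congr_deriv ?_
  rw [Finset.sum_add_distrib, tlL_expand α hα z Q' N h2,
    eval_eq_sum_range' h1.self_of_nhds, Finset.sum_mul]
  simp [mul_assoc]

section
variable (α : ℝ) (hα : -1 < α) (p : ℕ → ℝ[X]) (hm : ∀ n, (p n).Monic)
  (hd : ∀ n, (p n).natDegree = n) (z : ℝ)
  (ho : ∀ m n, m ≠ n → tlL α z (p m * p n) = 0)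
include hα hm hd ho

lemma tl_orth0 (n N : ℕ) (hN : N ≤ n) :
    ∀ q : ℝ[X], (∀ k, N ≤ k → q.coeff k = 0) → tlL α z (p n * q) = 0 := by
  induction N with
  | zero =>
    intro q hq
    have : q = 0 := by ext k; simp [hq k]
    simp [this, tlL_zero]
  | succ N ih =>
    intro q hq
    have h1 := ih (by omega) (q - C (q.coeff N) * p N) (by
      intro k hk
      rw [coeff_sub, coeff_C_mul]
      rcases hk.eq_or_lt with rfl | hk
      · have : (p N).coeff N = 1 := by have := (hm N).coeff_natDegree; rwa [hd] at this
        rw [this]; ring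
      · rw [hq k hk, coeff_eq_zero_of_natDegree_lt (p := p _) (by rw [hd]; exact hk)]; ring)
    have e : p n * (q - C (q.coeff N) * p N) = p n * q - C (q.coeff N) * (p n * p N) := by ring
    rw [e, tlL_sub α hα, tlL_C, ho n N (by omega)] at h1
    linarith

lemma tl_orth (n : ℕ) (q : ℝ[X]) (hq : ∀ k, n < k → q.coeff k = 0) :
    tlL α z (p n * q) = q.coeff n * tlL α z (p n * p n) := by
  have h1 := tl_orth0 α hα p hm hd z ho n n le_rfl (q - C (q.coeff n) * p n) (by
      intro k hk
      rw [coeff_sub, coeff_C_mul]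
      rcases hk.eq_or_lt with rfl | hk
      · have : (p n).coeff n = 1 := by have := (hm n).coeff_natDegree; rwa [hd] at this
        rw [this]; ring
      · rw [hq k hk, coeff_eq_zero_of_natDegree_lt (p := p _) (by rw [hd]; exact hk)]; ring)
  have e : p n * (q - C (q.coeff n) * p n) = p n * q - C (q.coeff n) * (p n * p n) := by ring
  rw [e, tlL_sub α hα, tlL_C] at h1
  linarith
end

lemma tl_coeff_X_deriv (q : ℝ[X]) (k : ℕ) : (X * derivative q).coeff k = k * q.coeff k := by
  cases k with
  | zero => simp
  | succ k => rw [coeff_X_mul, coeff_derivative]; push_cast; ring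

/-- Toda-type differential–difference equations for the `z`-dependent truncated Laguerre
polynomials: `z·σ_n′ = σ_n − a_n`, `z·h_n′ = (2n+α+1−b_n)·h_n`, and the Toda equations
`z·(ln a_n)′ = 2 − ∇b_n`, `z·b_n′ = b_n − Δa_n`. -/
theorem truncated_laguerre_toda (α : ℝ) (hα : -1 < α)
    (P : ℕ → ℝ → Polynomial ℝ)
    (hP_monic : ∀ n z, 0 < z → (P n z).Monic)
    (hP_deg : ∀ n z, 0 < z → (P n z).natDegree = n)
    (hP_orth : ∀ m n z, 0 < z → m ≠ n →
      ∫ x in (0:ℝ)..z, (P m z).eval x * (P n z).eval x * x ^ α * Real.exp (-x) = 0)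
    (a b : ℕ → ℝ → ℝ)
    (ha0 : ∀ z, a 0 z = 0)
    (hrec0 : ∀ z, 0 < z → Polynomial.X * P 0 z = P 1 z + Polynomial.C (b 0 z) * P 0 z)
    (hrec : ∀ n z, 1 ≤ n → 0 < z →
      Polynomial.X * P n z =
        P (n + 1) z + Polynomial.C (b n z) * P n z + Polynomial.C (a n z) * P (n - 1) z)
    (hdiff : ∀ n k, DifferentiableOn ℝ (fun z => (P n z).coeff k) (Set.Ioi 0))
    (σ : ℕ → ℝ → ℝ)
    (hσ0 : ∀ z, σ 0 z = 0)
    (hσ : ∀ n z, σ (n + 1) z = -((P (n + 1) z).coeff n))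
    (h : ℕ → ℝ → ℝ)
    (hh : ∀ n z, h n z = ∫ x in (0:ℝ)..z, ((P n z).eval x) ^ 2 * x ^ α * Real.exp (-x)) :
    (∀ n : ℕ, ∀ z : ℝ, 0 < z → z * deriv (σ n) z = σ n z - a n z) ∧
    (∀ n : ℕ, ∀ z : ℝ, 0 < z →
      z * deriv (h n) z = (2 * (n : ℝ) + α + 1 - b n z) * h n z) ∧
    (∀ n : ℕ, 1 ≤ n → ∀ z : ℝ, 0 < z →
      z * deriv (fun t => Real.log (a n t)) z = 2 - (b n z - b (n - 1) z)) ∧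
    (∀ n : ℕ, ∀ z : ℝ, 0 < z →
      z * deriv (b n) z = b n z - (a (n + 1) z - a n z)) := by
  have hmono : ∀ n z, 0 < z → (P n z).coeff n = 1 := by
    intro n z hz
    have := (hP_monic n z hz).coeff_natDegree
    rwa [hP_deg n z hz] at this
  have hhigh : ∀ n k z, 0 < z → n < k → (P n z).coeff k = 0 := by
    intro n k z hz hk
    exact coeff_eq_zero_of_natDegree_lt (by rw [hP_deg n z hz]; exact hk)
  have ho : ∀ z, 0 < z → ∀ m n, m ≠ n → tlL α z (P m z * P n z) = 0 := by
    intro z hz m n hmn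
    rw [← hP_orth m n z hz hmn]
    simp only [tlL, tlW, eval_mul, mul_assoc]
  have hhL : ∀ n z, h n z = tlL α z (P n z * P n z) := by
    intro n z
    rw [hh]
    simp only [tlL, tlW, eval_mul, mul_assoc, pow_two]
  have hpos : ∀ n z, 0 < z → 0 < h n z := by
    intro n z hz
    rw [hhL]
    exact tlL_pos α hα z hz _ (hP_monic n z hz).ne_zero
  have horth : ∀ n z, 0 < z → ∀ q : ℝ[X], (∀ k, n < k → q.coeff k = 0) →
      tlL α z (P n z * q) = q.coeff n * h n z := by
    intro n z hz q hq
    rw [hhL]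
    exact tl_orth α hα (fun n => P n z) (fun n => hP_monic n z hz) (fun n => hP_deg n z hz) z
      (ho z hz) n q hq
  have hσd : ∀ n z, 0 < z → DifferentiableAt ℝ (σ n) z := by
    intro n z hz
    cases n with
    | zero =>
      have : σ 0 = fun _ => 0 := funext hσ0
      rw [this]; fun_prop
    | succ n =>
      have : σ (n + 1) = fun z => -((P (n + 1) z).coeff n) := funext (hσ n)
      rw [this]
      exact ((hdiff (n + 1) n).differentiableAt (Ioi_mem_nhds hz)).neg
  -- derivative polynomial
  have hD : ∀ n z, 0 < z → ∃ Q : ℝ[X], tlD (P n) Q z ∧ (∀ k, n ≤ k → Q.coeff k = 0) ∧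
      ∀ k, k < n → Q.coeff k = deriv (fun t => (P n t).coeff k) z := by
    intro n z hz
    have hc : ∀ k, (∑ i ∈ Finset.range n, C (deriv (fun t => (P n t).coeff i) z) * X ^ i).coeff k
        = if k < n then deriv (fun t => (P n t).coeff k) z else 0 := by
      intro k
      simp [coeff_X_pow]
    refine ⟨∑ i ∈ Finset.range n, C (deriv (fun t => (P n t).coeff i) z) * X ^ i,
      ⟨⟨n + 1, ?_, ?_⟩, ?_⟩, ?_, ?_⟩
    · filter_upwards [Ioi_mem_nhds hz] with t ht
      rw [hP_deg n t ht]; omega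
    · refine Nat.lt_succ_of_le (natDegree_le_iff_coeff_eq_zero.2 ?_)
      intro k hk
      rw [hc, if_neg (by omega)]
    · intro k
      rw [hc]
      split_ifs with hk
      · exact ((hdiff n k).differentiableAt (Ioi_mem_nhds hz)).hasDerivAt
      · have : (fun t => (P n t).coeff k) =ᶠ[nhds z] fun _ => (P n z).coeff k := by
          filter_upwards [Ioi_mem_nhds hz] with t ht
          rcases (not_lt.1 hk).eq_or_lt with rfl | hk'
          · rw [hmono _ t ht, hmono _ z hz]
          · rw [hhigh _ _ t ht hk', hhigh _ _ z hz hk']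
        exact (hasDerivAt_const z _).congr_of_eventuallyEq this
    · intro k hk
      rw [hc, if_neg (by omega)]
    · intro k hk
      rw [hc, if_pos hk]
  -- recurrence consequences
  have hb : ∀ n z, 0 < z → b n z = σ (n + 1) z - σ n z := by
    intro n z hz
    cases n with
    | zero =>
      have e := congrArg (fun q => coeff q 0) (hrec0 z hz)
      simp only [coeff_add, coeff_C_mul, mul_coeff_zero, coeff_X_zero, zero_mul,
        coeff_C_zero, hmono 0 z hz] at e
      rw [hσ, hσ0, zero_add]
      linarith
    | succ n =>
      have e := congrArg (fun q => coeff q (n + 1)) (hrec (n + 1) z (by omega) hz)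
      simp only [coeff_add, coeff_C_mul, coeff_X_mul, hmono (n + 1) z hz, Nat.add_sub_cancel,
        hhigh n (n + 1) z hz (by omega)] at e
      rw [hσ, hσ]
      linarith
  have hXb : ∀ n z, 0 < z → tlL α z (P n z * (X * P n z)) = b n z * h n z := by
    intro n z hz
    cases n with
    | zero =>
      have e : P 0 z * (X * P 0 z) = P 0 z * P 1 z + C (b 0 z) * (P 0 z * P 0 z) := by
        rw [hrec0 z hz]; ring
      rw [e, tlL_add α hα, tlL_C, ho z hz 0 1 (by omega), ← hhL]; ring
    | succ n =>
      have e : P (n+1) z * (X * P (n+1) z) = P (n+1) z * P (n+1+1) z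
          + C (b (n+1) z) * (P (n+1) z * P (n+1) z) + C (a (n+1) z) * (P (n+1) z * P n z) := by
        rw [hrec (n+1) z (by omega) hz, Nat.add_sub_cancel]; ring
      rw [e, tlL_add α hα, tlL_add α hα, tlL_C, tlL_C, ho z hz _ _ (by omega),
        ho z hz (n+1) n (by omega), ← hhL]; ring
  have hXP : ∀ n z, 0 < z → tlL α z (P (n+1) z * (X * P n z)) = h (n+1) z := by
    intro n z hz
    rw [horth (n+1) z hz, coeff_X_mul, hmono n z hz, one_mul]
    intro k hk
    obtain ⟨j, rfl⟩ : ∃ j, k = j + 1 := ⟨k - 1, by omega⟩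
    rw [coeff_X_mul, hhigh n j z hz (by omega)]
  have hah : ∀ n z, 0 < z → h (n+1) z = a (n+1) z * h n z := by
    intro n z hz
    have e : P (n+1) z * (X * P n z) = P n z * P (n+1+1) z
          + C (b (n+1) z) * (P n z * P (n+1) z) + C (a (n+1) z) * (P n z * P n z) := by
      have : P (n+1) z * (X * P n z) = P n z * (X * P (n+1) z) := by ring
      rw [this, hrec (n+1) z (by omega) hz, Nat.add_sub_cancel]; ring
    rw [← hXP n z hz, e, tlL_add α hα, tlL_add α hα, tlL_C, tlL_C, ho z hz _ _ (by omega),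
        ho z hz n (n+1) (by omega), ← hhL]; ring
  -- h equation
  have H2 : ∀ n : ℕ, ∀ z : ℝ, 0 < z → DifferentiableAt ℝ (h n) z ∧
      z * deriv (h n) z = (2 * (n : ℝ) + α + 1 - b n z) * h n z := by
    intro n z hz
    obtain ⟨Q, hQ, hQ0, -⟩ := hD n z hz
    have hder := tlD_L α hα hz (tlD_mul hQ hQ)
    have hf : h n = fun t => tlL α t (P n t * P n t) := funext (hhL n)
    rw [← hf] at hder
    refine ⟨hder.differentiableAt, ?_⟩
    rw [hder.deriv]
    have hpe := tlL_pearson α hα z hz (P n z * P n z)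
    have e1 : Q * P n z + P n z * Q = P n z * Q + P n z * Q := by ring
    have e2 : (C (α + 1) - X) * (P n z * P n z) + X * derivative (P n z * P n z)
        = C (α + 1) * (P n z * P n z) - P n z * (X * P n z)
          + C 2 * (P n z * (X * derivative (P n z))) := by
      rw [derivative_mul, show (C (2:ℝ) : ℝ[X]) = 2 from rfl]; ring
    rw [e2, tlL_add α hα, tlL_sub α hα, tlL_C, tlL_C, hXb n z hz, ← hhL,
      horth n z hz (X * derivative (P n z)), tl_coeff_X_deriv, hmono n z hz] at hpe
    · rw [e1, tlL_add α hα, horth n z hz Q (fun k hk => hQ0 k hk.le), hQ0 n le_rfl]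
      linarith
    · intro k hk
      rw [tl_coeff_X_deriv, hhigh n k z hz hk, mul_zero]
  have H1 : ∀ n : ℕ, ∀ z : ℝ, 0 < z → z * deriv (σ n) z = σ n z - a n z := by
    intro n z hz
    cases n with
    | zero =>
      have : σ 0 = fun _ => 0 := funext hσ0
      rw [this, ha0]; simp
    | succ n =>
      obtain ⟨Q, hQ, hQ0, hQ1⟩ := hD (n+1) z hz
      obtain ⟨R, hR, hR0, -⟩ := hD n z hz
      have hder := tlD_L α hα hz (tlD_mul hQ hR)
      have hz0 : (fun t => tlL α t (P (n+1) t * P n t)) =ᶠ[nhds z] fun _ => 0 := by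
        filter_upwards [Ioi_mem_nhds hz] with t ht
        exact ho t ht _ _ (by omega)
      have hd0 := hder.unique ((hasDerivAt_const z (0:ℝ)).congr_of_eventuallyEq hz0)
      have hQc : Q.coeff n = - deriv (σ (n+1)) z := by
        have : σ (n + 1) = fun z => -((P (n + 1) z).coeff n) := funext (hσ n)
        rw [hQ1 n (by omega), this, deriv.fun_neg, neg_neg]
      have hpe := tlL_pearson α hα z hz (P (n+1) z * P n z)
      have e2 : (C (α + 1) - X) * (P (n+1) z * P n z) + X * derivative (P (n+1) z * P n z)
        = C (α + 1) * (P (n+1) z * P n z) - P (n+1) z * (X * P n z)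
          + (P n z * (X * derivative (P (n+1) z) - C ((n:ℝ)+1) * P (n+1) z)
            + C ((n:ℝ)+1) * (P (n+1) z * P n z)
            + P (n+1) z * (X * derivative (P n z))) := by
        rw [derivative_mul]; ring
      rw [e2, tlL_add α hα, tlL_sub α hα, tlL_add α hα, tlL_add α hα, tlL_C, tlL_C,
        hXP n z hz, ho z hz (n+1) n (by omega), horth (n+1) z hz (X * derivative (P n z)),
        tl_coeff_X_deriv, hhigh n (n+1) z hz (by omega), horth n z hz, coeff_sub,
        tl_coeff_X_deriv, coeff_C_mul, hah n z hz] at hpe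
      · rw [mul_comm Q, tlL_add α hα, horth n z hz Q (fun k hk => hQ0 k hk), hQc,
          horth (n+1) z hz R (fun k hk => hR0 k (by omega)), hR0 (n+1) (by omega)] at hd0
        have hs := hσ n z
        have hp := hpos n z hz
        apply mul_right_cancel₀ hp.ne'
        rw [hs]
        linear_combination -hpe - z * hd0
      · intro k hk
        rw [coeff_sub, tl_coeff_X_deriv, coeff_C_mul]
        rcases (Nat.succ_le_of_lt hk).eq_or_lt with rfl | hk'
        · push_cast; ring
        · rw [hhigh (n+1) k z hz hk']; ring
      · intro k hk
        rw [tl_coeff_X_deriv, hhigh n k z hz (by omega), mul_zero]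
  refine ⟨H1, fun n z hz => (H2 n z hz).2, ?_, ?_⟩
  · intro n hn z hz
    obtain ⟨m, rfl⟩ : ∃ m, n = m + 1 := ⟨n - 1, by omega⟩
    rw [Nat.add_sub_cancel]
    have e : (fun t => Real.log (a (m+1) t)) =ᶠ[nhds z]
        fun t => Real.log (h (m+1) t) - Real.log (h m t) := by
      filter_upwards [Ioi_mem_nhds hz] with t ht
      have h1 := hpos m t ht
      have h2 := hpos (m+1) t ht
      rw [← Real.log_div h2.ne' h1.ne', hah m t ht, mul_div_cancel_right₀ _ h1.ne']
    obtain ⟨d1, f1⟩ := H2 m z hz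
    obtain ⟨d2, f2⟩ := H2 (m+1) z hz
    have p1 := hpos m z hz
    have p2 := hpos (m+1) z hz
    rw [e.deriv_eq, ((d2.hasDerivAt.log p2.ne').fun_sub (d1.hasDerivAt.log p1.ne')).deriv,
      mul_sub, ← mul_div_assoc, ← mul_div_assoc, f1, f2, mul_div_cancel_right₀ _ p1.ne',
      mul_div_cancel_right₀ _ p2.ne']
    push_cast; ring
  · intro n z hz
    have e : b n =ᶠ[nhds z] fun t => σ (n+1) t - σ n t := by
      filter_upwards [Ioi_mem_nhds hz] with t ht
      exact hb n t ht
    rw [e.deriv_eq, deriv_fun_sub (hσd _ z hz) (hσd _ z hz), mul_sub, H1 _ z hz, H1 _ z hz,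
      hb n z hz]
    ring
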